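/- arXiv:1506.02901 — 2 statements merged into one kernel-verified Lean document; each statement's English description precedes it below -/
import Mathlib

section
/- The error of the dual-corrected output is bounded by the product of the dual norm of the dual residual and the norm of the primal error: |s^𝒩 − s_N^{pd}| ≤ ‖r^du‖_{(X^𝒩)'} · ‖e^pr‖_X, where e^pr = u^𝒩 − u_N is the primal error. -/
/-!
Since `a u w = f w` for the truth solution `u`, the primal residual of an approximation `u'` at `w`
is `a (u - u') w`. The error of the corrected output is therefore `l (u - u') + a (u - u') w`, which
is minus the dual residual at the primal error, and the dual norm bounds this value.
-/

/-- The dual norm of a functional `r` taken over a subspace `S`: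
the supremum over `v ∈ S`, `v ≠ 0`, of `‖r v‖ / ‖v‖`. -/
noncomputable def dualNormOn {X : Type*} [NormedAddCommGroup X] [NormedSpace ℂ X]
    (S : Submodule ℂ X) (r : X → ℂ) : ℝ :=
  sSup {c : ℝ | ∃ v ∈ S, v ≠ 0 ∧ c = ‖r v‖ / ‖v‖}

theorem dual_corrected_output_error_eq_neg_dual_residual
    {G ι A F F' : Type*} [AddCommGroup G] [AddCommGroup A]
    [FunLike F G (ι → A)] [AddMonoidHomClass F G (ι → A)]
    [FunLike F' G A] [AddMonoidHomClass F' G A]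
    (a : F) (f : ι → A) (l : F') {u : G} {w : ι} (hu : a u w = f w) (u' : G) :
    l u - (l u' - (f w - a u' w)) = -(-l (u - u') - a (u - u') w) := by
  rw [← hu, map_sub, map_sub, Pi.sub_apply]
  abel

section

variable {X : Type*} [NormedAddCommGroup X] [NormedSpace ℂ X] {S : Submodule ℂ X}

theorem norm_le_dualNormOn_mul_norm (r : X →L[ℂ] ℂ) {v : X} (hv : v ∈ S) :
    ‖r v‖ ≤ dualNormOn S r * ‖v‖ := by
  obtain rfl | hv0 := eq_or_ne v 0
  · simp
  have h_bdd : BddAbove {c : ℝ | ∃ v ∈ S, v ≠ 0 ∧ c = ‖r v‖ / ‖v‖} := by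
    refine ⟨‖r‖, ?_⟩
    rintro _ ⟨v, -, -, rfl⟩
    exact r.ratio_le_opNorm v
  rw [← div_le_iff₀ (norm_pos_iff.mpr hv0)]
  exact le_csSup h_bdd ⟨v, hv, hv0, rfl⟩

/-- The product topology on `X → ℂ` makes continuity of `a` mean continuity of `a · w` for each `w`.
Bilinear and sesquilinear forms are both of this type. -/
theorem dual_corrected_output_error_bound_general (a : X →L[ℂ] X → ℂ) (f : X → ℂ) (l : X →L[ℂ] ℂ)
    {u u' w : X} (hu : u ∈ S) (h_truth : ∀ v ∈ S, a u v = f v) (hu' : u' ∈ S) (hw : w ∈ S) :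
    ‖l u - (l u' - (f w - a u' w))‖ ≤ dualNormOn S (fun v => -l v - a v w) * ‖u - u'‖ := by
  rw [dual_corrected_output_error_eq_neg_dual_residual a f l (h_truth w hw), norm_neg]
  exact norm_le_dualNormOn_mul_norm (-l - (ContinuousLinearMap.proj w).comp a) (S.sub_mem hu hu')

end

/-- The error of the dual-corrected output is bounded by the
product of the dual norm of the dual residual and the norm of the primal
error: `|s^𝒩 − s_N^{pd}| ≤ ‖r^du‖_{(X^𝒩)'} ⬝ ‖e^pr‖_X`. -/
theorem dual_corrected_output_error_bound
    {X : Type*} [NormedAddCommGroup X] [NormedSpace ℂ X]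
    (a : X →L[ℂ] X →L[ℂ] ℂ) (f l : X →L[ℂ] ℂ)
    (XN XNN : Submodule ℂ X) (h_sub : XN ≤ XNN)
    (uT : X) (huT : uT ∈ XNN) (h_truth : ∀ v ∈ XNN, a uT v = f v)
    (uR : X) (huR : uR ∈ XN) (h_reduced : ∀ v ∈ XN, a uR v = f v)
    (wT : X) (hwT : wT ∈ XNN) (h_dual_truth : ∀ v ∈ XNN, a v wT = -l v)
    (wR : X) (hwR : wR ∈ XN) (h_dual_reduced : ∀ v ∈ XN, a v wR = -l v) :
    ‖l uT - (l uR - (f wR - a uR wR))‖ ≤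
      dualNormOn XNN (fun v => -l v - a v wR) * ‖uT - uR‖ :=
  dual_corrected_output_error_bound_general (.pi fun w => a.flip w) f l huT h_truth
    (h_sub huR) (h_sub hwR)
end

section
/- Let 0 ≤ M < 1, k ∈ ℝ, let α : ℝ → ℂ be continuously differentiable with α(s) ≠ 0 for all s, and let p : ℝ² → ℂ be twice continuously differentiable. Define the operator T by (Tq)(x₁, x₂) = α(x₁)(∂_{x₁} q(x₁, x₂) + (ikM/(1 − M²)) q(x₁, x₂)). Then at every point (x₁, x₂) ∈ ℝ², the PML operator satisfies the identity (1 − M²) T(Tp) + ∂²_{x₂} p + (k²/(1 − M²)) p = α(x₁) · [ ∂_{x₁}( (1 − M²) α(x₁) ∂_{x₁} p + 2ikM α(x₁) p ) + ∂_{x₂}( α(x₁)^{-1} ∂_{x₂} p ) + ( k_α² − ikM α'(x₁) ) p ], where k_α² = k² ( α(x₁)^{-1} − α(x₁) M² ) / (1 − M²). -/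
open Complex

/-- Partial derivative with respect to `x₁` of a function on `ℝ²`. -/
noncomputable def dx1 (g : ℝ × ℝ → ℂ) (x : ℝ × ℝ) : ℂ :=
  fderiv ℝ g x (1, 0)

/-- Partial derivative with respect to `x₂` of a function on `ℝ²`. -/
noncomputable def dx2 (g : ℝ × ℝ → ℂ) (x : ℝ × ℝ) : ℂ :=
  fderiv ℝ g x (0, 1)

/-- The PML operator `(Tq)(x₁,x₂) = α(x₁)(∂_{x₁} q + (ikM/(1 − M²)) q)`. -/
noncomputable def pmlT (M k : ℝ) (α : ℝ → ℂ) (q : ℝ × ℝ → ℂ) : ℝ × ℝ → ℂ :=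
  fun x => α x.1 * (dx1 q x + (I * (k : ℂ) * (M : ℂ) / (1 - (M : ℂ) ^ 2)) * q x)

/-! Write `T = α (∂₁ + β)` with the constant `β = ikM/(1 - M²)`. The product rule, used once in each
direction, gives

  `(∂₁ + β)(α (∂₁ + β) p) = ∂₁(α ∂₁p + 2βα p) + (αβ² - βα') p`,

where one of the two copies of `∂₁(βα p)` comes from `βα ∂₁p = ∂₁(βα p) - βα' p`. Multiplying by
`1 - M²` turns `β` into `ikM` and `β²` into `-k²M²/(1 - M²)`. The remaining terms of the operator
acquire the common factor `α` because `α` is independent of `x₂`. -/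

open scoped Topology

section CompFst

variable {𝕜 E F : Type*} [NontriviallyNormedField 𝕜] [NormedAddCommGroup E] [NormedSpace 𝕜 E]
  [NormedAddCommGroup F] [NormedSpace 𝕜 F]

theorem differentiableAt_comp_fst {G : Type*} [NormedAddCommGroup G] [NormedSpace 𝕜 G]
    {f : E → G} {x : E × F} (hf : DifferentiableAt 𝕜 f x.1) :
    DifferentiableAt 𝕜 (fun y : E × F => f y.1) x :=
  hf.comp x differentiableAt_fst

theorem fderiv_comp_fst {a : 𝕜 → E} {x : 𝕜 × F} (ha : DifferentiableAt 𝕜 a x.1) (v : 𝕜 × F) :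
    fderiv 𝕜 (fun y : 𝕜 × F => a y.1) x v = v.1 • deriv a x.1 := by
  have h : HasFDerivAt (fun y : 𝕜 × F => a y.1) _ x :=
    ha.hasFDerivAt.comp x hasFDerivAt_fst
  simp [h.fderiv]

end CompFst

section PartialDerivatives

variable {f g : ℝ × ℝ → ℂ} {a : ℝ → ℂ} {x : ℝ × ℝ}

theorem dx1_add (hf : DifferentiableAt ℝ f x) (hg : DifferentiableAt ℝ g x) :
    dx1 (fun y => f y + g y) x = dx1 f x + dx1 g x := by
  simp [dx1, fderiv_fun_add hf hg]

theorem dx1_const_mul (c : ℂ) (hf : DifferentiableAt ℝ f x) :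
    dx1 (fun y => c * f y) x = c * dx1 f x := by
  simp [dx1, fderiv_const_mul hf c]

theorem dx1_comp_fst_mul (ha : DifferentiableAt ℝ a x.1) (hg : DifferentiableAt ℝ g x) :
    dx1 (fun y => a y.1 * g y) x = a x.1 * dx1 g x + deriv a x.1 * g x := by
  simp [dx1, fderiv_fun_mul (differentiableAt_comp_fst ha) hg, fderiv_comp_fst ha, mul_comm (g x)]

theorem dx2_comp_fst_mul (ha : DifferentiableAt ℝ a x.1) (hg : DifferentiableAt ℝ g x) :
    dx2 (fun y => a y.1 * g y) x = a x.1 * dx2 g x := by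
  simp [dx2, fderiv_fun_mul (differentiableAt_comp_fst ha) hg, fderiv_comp_fst ha]

theorem differentiableAt_dx1 (hf : DifferentiableAt ℝ (fderiv ℝ f) x) :
    DifferentiableAt ℝ (dx1 f) x :=
  hf.clm_apply (differentiableAt_const _)

theorem differentiableAt_dx2 (hf : DifferentiableAt ℝ (fderiv ℝ f) x) :
    DifferentiableAt ℝ (dx2 f) x :=
  hf.clm_apply (differentiableAt_const _)

end PartialDerivatives

/-- The constant `β = ikM/(1 - M²)` in `T = α (∂_{x₁} + β)`. As for `pmlT`, it is `0` by convention
when `M² = 1`. -/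
noncomputable def pmlShift (M k : ℝ) : ℂ :=
  I * (k : ℂ) * (M : ℂ) / (1 - (M : ℂ) ^ 2)

section PMLOperator

variable {M k : ℝ} {α : ℝ → ℂ} {p : ℝ × ℝ → ℂ} {x : ℝ × ℝ}

theorem pmlT_apply (q : ℝ × ℝ → ℂ) (x : ℝ × ℝ) :
    pmlT M k α q x = α x.1 * (dx1 q x + pmlShift M k * q x) :=
  rfl

theorem one_sub_ofReal_sq_ne_zero (hM : M ^ 2 ≠ 1) : 1 - (M : ℂ) ^ 2 ≠ 0 :=
  sub_ne_zero.mpr (mod_cast hM.symm)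

theorem one_sub_sq_mul_pmlShift (hM : M ^ 2 ≠ 1) :
    (1 - (M : ℂ) ^ 2) * pmlShift M k = I * k * M :=
  mul_div_cancel₀ _ (one_sub_ofReal_sq_ne_zero hM)

theorem one_sub_sq_mul_pmlShift_sq (hM : M ^ 2 ≠ 1) :
    (1 - (M : ℂ) ^ 2) * pmlShift M k ^ 2 = -((k : ℂ) ^ 2 * (M : ℂ) ^ 2 / (1 - (M : ℂ) ^ 2)) :=
  calc (1 - (M : ℂ) ^ 2) * pmlShift M k ^ 2
      = (1 - (M : ℂ) ^ 2) * pmlShift M k * pmlShift M k := by ring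
    _ = I * k * M * (I * k * M / (1 - (M : ℂ) ^ 2)) := by
      rw [one_sub_sq_mul_pmlShift hM, pmlShift]
    _ = -((k : ℂ) ^ 2 * (M : ℂ) ^ 2 / (1 - (M : ℂ) ^ 2)) := by
      linear_combination ((k : ℂ) ^ 2 * (M : ℂ) ^ 2 / (1 - (M : ℂ) ^ 2)) * I_sq

/-- The `x₁`-component `α ∂_{x₁} p + 2βα p` of the vector field whose divergence appears in the
PML operator, normalized by dividing by `1 - M²`. -/
noncomputable def pmlFlux (M k : ℝ) (α : ℝ → ℂ) (p : ℝ × ℝ → ℂ) : ℝ × ℝ → ℂ :=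
  fun y => α y.1 * (dx1 p y + 2 * pmlShift M k * p y)

theorem one_sub_sq_mul_pmlFlux (hM : M ^ 2 ≠ 1) (y : ℝ × ℝ) :
    (1 - (M : ℂ) ^ 2) * pmlFlux M k α p y =
      (1 - (M : ℂ) ^ 2) * α y.1 * dx1 p y + 2 * I * k * M * α y.1 * p y := by
  rw [pmlFlux]
  linear_combination 2 * α y.1 * p y * one_sub_sq_mul_pmlShift (k := k) hM

theorem dx1_comp_fst_mul_dx1_add_const_mul (c : ℂ) (hα : DifferentiableAt ℝ α x.1)
    (hp : DifferentiableAt ℝ p x) (hp₁ : DifferentiableAt ℝ (dx1 p) x) :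
    dx1 (fun y => α y.1 * (dx1 p y + c * p y)) x =
      α x.1 * (dx1 (dx1 p) x + c * dx1 p x) + deriv α x.1 * (dx1 p x + c * p x) := by
  rw [dx1_comp_fst_mul hα (hp₁.fun_add (hp.const_mul c)), dx1_add hp₁ (hp.const_mul c),
    dx1_const_mul c hp]

theorem pmlT_pmlT_eq_dx1_pmlFlux (hα : DifferentiableAt ℝ α x.1)
    (hp : DifferentiableAt ℝ p x) (hp₁ : DifferentiableAt ℝ (dx1 p) x) :
    pmlT M k α (pmlT M k α p) x =
      α x.1 * (dx1 (pmlFlux M k α p) x +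
        (α x.1 * pmlShift M k ^ 2 - pmlShift M k * deriv α x.1) * p x) := by
  have hT : dx1 (pmlT M k α p) x = α x.1 * (dx1 (dx1 p) x + pmlShift M k * dx1 p x) +
      deriv α x.1 * (dx1 p x + pmlShift M k * p x) :=
    dx1_comp_fst_mul_dx1_add_const_mul _ hα hp hp₁
  have hflux : dx1 (pmlFlux M k α p) x =
      α x.1 * (dx1 (dx1 p) x + 2 * pmlShift M k * dx1 p x) +
        deriv α x.1 * (dx1 p x + 2 * pmlShift M k * p x) :=
    dx1_comp_fst_mul_dx1_add_const_mul _ hα hp hp₁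
  rw [pmlT_apply, hT, pmlT_apply, hflux]
  ring

theorem differentiableAt_pmlFlux (hα : DifferentiableAt ℝ α x.1)
    (hp : DifferentiableAt ℝ p x) (hp₁ : DifferentiableAt ℝ (dx1 p) x) :
    DifferentiableAt ℝ (pmlFlux M k α p) x :=
  (differentiableAt_comp_fst hα).fun_mul (hp₁.fun_add (hp.const_mul _))

theorem one_sub_sq_mul_pmlT_pmlT (hM : M ^ 2 ≠ 1) (hα : DifferentiableAt ℝ α x.1)
    (hp : DifferentiableAt ℝ p x) (hp₁ : DifferentiableAt ℝ (dx1 p) x) :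
    (1 - (M : ℂ) ^ 2) * pmlT M k α (pmlT M k α p) x =
      α x.1 * (dx1 (fun y => (1 - (M : ℂ) ^ 2) * α y.1 * dx1 p y +
          2 * I * k * M * α y.1 * p y) x -
        ((k : ℂ) ^ 2 * (α x.1 * (M : ℂ) ^ 2) / (1 - (M : ℂ) ^ 2) + I * k * M * deriv α x.1) *
          p x) := by
  simp only [← one_sub_sq_mul_pmlFlux hM]
  rw [dx1_const_mul _ (differentiableAt_pmlFlux hα hp hp₁), pmlT_pmlT_eq_dx1_pmlFlux hα hp hp₁]
  linear_combination α x.1 * p x * (α x.1 * one_sub_sq_mul_pmlShift_sq (k := k) hM -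
    deriv α x.1 * one_sub_sq_mul_pmlShift (k := k) hM)

theorem mul_dx2_inv_mul_dx2 (hα : DifferentiableAt ℝ α x.1) (hα0 : α x.1 ≠ 0)
    (hp₂ : DifferentiableAt ℝ (dx2 p) x) :
    α x.1 * dx2 (fun y => (α y.1)⁻¹ * dx2 p y) x = dx2 (dx2 p) x := by
  rw [dx2_comp_fst_mul (a := fun s => (α s)⁻¹) (hα.fun_inv hα0) hp₂, mul_inv_cancel_left₀ hα0]

end PMLOperator

theorem pml_operator_divergence_form_general
    (M k : ℝ) (hM : M ^ 2 ≠ 1) (α : ℝ → ℂ) (p : ℝ × ℝ → ℂ) (x : ℝ × ℝ)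
    (hα : DifferentiableAt ℝ α x.1) (hα0 : α x.1 ≠ 0)
    (hp : ∀ᶠ y in 𝓝 x, DifferentiableAt ℝ p y) (hp' : DifferentiableAt ℝ (fderiv ℝ p) x) :
    (1 - (M : ℂ) ^ 2) * pmlT M k α (pmlT M k α p) x + dx2 (dx2 p) x +
        ((k : ℂ) ^ 2 / (1 - (M : ℂ) ^ 2)) * p x =
      α x.1 *
        (dx1 (fun y => (1 - (M : ℂ) ^ 2) * α y.1 * dx1 p y +
            2 * I * (k : ℂ) * (M : ℂ) * α y.1 * p y) x +
          dx2 (fun y => (α y.1)⁻¹ * dx2 p y) x +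
          ((k : ℂ) ^ 2 * ((α x.1)⁻¹ - α x.1 * (M : ℂ) ^ 2) / (1 - (M : ℂ) ^ 2)
            - I * (k : ℂ) * (M : ℂ) * deriv α x.1) * p x) := by
  rw [one_sub_sq_mul_pmlT_pmlT hM hα hp.self_of_nhds (differentiableAt_dx1 hp'),
    ← mul_dx2_inv_mul_dx2 hα hα0 (differentiableAt_dx2 hp')]
  linear_combination
    -((k : ℂ) ^ 2 / (1 - (M : ℂ) ^ 2) * p x) * mul_inv_cancel₀ hα0

/-- For `0 ≤ M < 1`, `k ∈ ℝ`, `α : ℝ → ℂ` continuously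
differentiable and nowhere zero, and `p : ℝ² → ℂ` twice continuously
differentiable, at every point `(x₁,x₂)` the PML operator satisfies
`(1 − M²) T(Tp) + ∂²_{x₂} p + (k²/(1 − M²)) p
  = α(x₁) · [ ∂_{x₁}((1 − M²) α ∂_{x₁} p + 2ikM α p)
      + ∂_{x₂}(α⁻¹ ∂_{x₂} p) + (k_α² − ikM α') p ]`,
where `k_α² = k² (α⁻¹ − α M²)/(1 − M²)`. -/
theorem pml_operator_divergence_form
    (M k : ℝ) (hM0 : 0 ≤ M) (hM1 : M < 1)
    (α : ℝ → ℂ) (hα : ContDiff ℝ 1 α) (hα0 : ∀ s, α s ≠ 0)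
    (p : ℝ × ℝ → ℂ) (hp : ContDiff ℝ 2 p) :
    ∀ x : ℝ × ℝ,
      (1 - (M : ℂ) ^ 2) * pmlT M k α (pmlT M k α p) x + dx2 (dx2 p) x +
          ((k : ℂ) ^ 2 / (1 - (M : ℂ) ^ 2)) * p x =
        α x.1 *
          (dx1 (fun y => (1 - (M : ℂ) ^ 2) * α y.1 * dx1 p y +
              2 * I * (k : ℂ) * (M : ℂ) * α y.1 * p y) x +
            dx2 (fun y => (α y.1)⁻¹ * dx2 p y) x +
            ((k : ℂ) ^ 2 * ((α x.1)⁻¹ - α x.1 * (M : ℂ) ^ 2) / (1 - (M : ℂ) ^ 2)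
              - I * (k : ℂ) * (M : ℂ) * deriv α x.1) * p x) := by
  intro x
  have hp' : Differentiable ℝ (fderiv ℝ p) :=
    (hp.fderiv_right (m := 1) (by norm_num)).differentiable one_ne_zero
  exact pml_operator_divergence_form_general M k (by nlinarith) α p x
    (hα.differentiable one_ne_zero _) (hα0 _)
    (.of_forall (hp.differentiable two_ne_zero)) (hp' x)
end
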